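/- arXiv:2309.08576 — 4 statements merged into one kernel-verified Lean document; each statement's English description precedes it below -/
import Mathlib

section
/- Let K > 1 and m > 0, and let b : ℤ → ℝ be a sequence satisfying b_n ≥ m for all n ∈ ℤ and b_{n+1} + b_{n−1} ≥ 2K b_n for all n ∈ ℤ. Then there exists a constant c > 0 such that b_n ≥ c K^{|n|} for all n ∈ ℤ. -/
/-!
The inequality and the lower bound `m` make the increments of `b` grow by at least `2 (K - 1) m` at
each step, so far enough in either direction some increment is nonnegative. From then on,
`b (n + 1) ≥ 2 K b n - b (n - 1) ≥ (2 K - 1) b n ≥ K b n`, which propagates both the monotonicity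
and the geometric growth. This is `one_sided_growth`, used for `b n` and for its reflection `b (-n)`.
-/

theorem one_sided_growth (K m : ℝ) (hK : 1 < K) (hm : 0 < m) (a : ℕ → ℝ) (hlow : ∀ n, m ≤ a n)
    (hconv : ∀ n, 2 * K * a (n + 1) ≤ a (n + 2) + a n) :
    ∃ c : ℝ, 0 < c ∧ ∀ n, c * K ^ n ≤ a n := by
  have hK0 : 0 < K := by linarith
  have hinc : ∀ n : ℕ, a 1 - a 0 + n * (2 * (K - 1) * m) ≤ a (n + 1) - a n := by
    intro n
    induction n with
    | zero => simp
    | succ k ih =>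
      have h1 := hconv k
      have h2 := mul_le_mul_of_nonneg_left (hlow (k + 1)) (by linarith : 0 ≤ 2 * (K - 1))
      push_cast
      linarith
  obtain ⟨N, hN⟩ : ∃ N, a N ≤ a (N + 1) := by
    have hpos : 0 < 2 * (K - 1) * m := mul_pos (by linarith) hm
    obtain ⟨N, hN⟩ := exists_nat_ge ((a 0 - a 1) / (2 * (K - 1) * m))
    rw [div_le_iff₀ hpos] at hN
    exact ⟨N, by linarith [hinc N]⟩
  have hgrow : ∀ k, a (N + k) ≤ a (N + k + 1) ∧ m * K ^ k ≤ a (N + k + 1) := by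
    intro k
    induction k with
    | zero => exact ⟨hN, by simpa using hlow (N + 1)⟩
    | succ k ih =>
      obtain ⟨h1, h2⟩ := ih
      have h3 := hconv (N + k)
      have h4 : 0 < a (N + k + 1) := hm.trans_le (hlow _)
      have h5 : K * a (N + k + 1) ≤ a (N + k + 2) := by nlinarith
      have h6 := mul_le_mul_of_nonneg_left h2 hK0.le
      refine ⟨show a (N + k + 1) ≤ a (N + k + 2) by nlinarith,
        show m * K ^ (k + 1) ≤ a (N + k + 2) from ?_⟩
      rw [pow_succ]
      linarith
  refine ⟨m / K ^ (N + 1), by positivity, fun n => ?_⟩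
  rw [div_mul_eq_mul_div, div_le_iff₀ (by positivity)]
  rcases le_total n (N + 1) with h | h
  · exact mul_le_mul (hlow n) (pow_le_pow_right₀ hK.le h) (by positivity)
      (hm.le.trans (hlow n))
  · obtain ⟨k, rfl⟩ := Nat.exists_eq_add_of_le h
    have h1 := mul_le_mul_of_nonneg_right (hgrow k).2 (by positivity : 0 ≤ K ^ (N + 1))
    rw [show N + 1 + k = N + k + 1 by ring, show N + k + 1 = k + (N + 1) by ring, pow_add]
    rw [show N + k + 1 = k + (N + 1) by ring] at h1
    linarith


/-- **Forwards–Backwards Principle** (sequence form, Lemma 1.3 of Elgindi–Liss).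
If `b : ℤ → ℝ` satisfies `b n ≥ m > 0` for all `n` and the discrete convexity-type
inequality `b (n+1) + b (n-1) ≥ 2 K b n` with `K > 1`, then `b n ≥ c K^{|n|}`
for some constant `c > 0`. -/
theorem forwards_backwards_principle (K m : ℝ) (hK : 1 < K) (hm : 0 < m)
    (b : ℤ → ℝ) (hlow : ∀ n : ℤ, m ≤ b n)
    (hconv : ∀ n : ℤ, 2 * K * b n ≤ b (n + 1) + b (n - 1)) :
    ∃ c : ℝ, 0 < c ∧ ∀ n : ℤ, c * K ^ n.natAbs ≤ b n := by
  obtain ⟨c, hc, h⟩ := one_sided_growth K m hK hm (fun n => b n) (fun n => hlow n) (by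
    intro n
    have := hconv (n + 1)
    rw [show (n : ℤ) + 1 + 1 = n + 2 by ring, show (n : ℤ) + 1 - 1 = n by ring] at this
    push_cast
    exact this)
  obtain ⟨d, hd, h'⟩ := one_sided_growth K m hK hm (fun n => b (-n)) (fun n => hlow _) (by
    intro n
    have := hconv (-(n + 1))
    rw [show -((n : ℤ) + 1) + 1 = -n by ring,
      show -((n : ℤ) + 1) - 1 = -(n + 2) by ring] at this
    push_cast
    linarith)
  have hK0 : 0 < K := by linarith
  refine ⟨min c d, lt_min hc hd, fun n => ?_⟩
  have hp : 0 ≤ K ^ n.natAbs := by positivity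
  rcases Int.natAbs_eq n with hn | hn
  · refine (mul_le_mul_of_nonneg_right (min_le_left c d) hp).trans ((h n.natAbs).trans_eq ?_)
    exact congrArg b hn.symm
  · refine (mul_le_mul_of_nonneg_right (min_le_right c d) hp).trans ((h' n.natAbs).trans_eq ?_)
    exact congrArg b hn.symm
end

section
/- There exists a universal constant C > 0 such that for every K ≥ 1, every a₁, a₂, a₃, a₄ ∈ {−1, 1}, and every v ∈ ℝ², the 4×2 real matrix Q with rows (1, K a₁), (K a₂, 1 + K² a₁ a₂), (1 + K² a₃ a₄, −K a₄), (−K a₃, 1) satisfies |Q v|² ≥ (K⁴ − C K³) |v|², where |·| denotes the Euclidean norm. -/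
/-! Only the second and third rows of `Q` have entries of order `K²`. Each of these rows
contributes `K⁴` times the square of one coordinate, with cross terms of size `O(K³) |v|²` by
AM-GM (`dominant_row_bound`). Summing the two bounds and discarding the other rows gives
`C = 4`. -/

/-- Lower bound for a row with entries `± K` and `1 ± K²`: writing it as `p + q` with
`q = ± K² y`, the term `p²` is dropped and `2 p q` is bounded below by AM-GM and `K² ≤ K³`. -/
theorem dominant_row_bound (K : ℝ) (hK : 1 ≤ K) (d e : ℝ) (hd : d = 1 ∨ d = -1)
    (he : e = 1 ∨ e = -1) (x y : ℝ) :
    K ^ 4 * y ^ 2 - K ^ 3 * (x ^ 2 + 3 * y ^ 2) ≤ (K * e * x + (1 + K ^ 2 * d) * y) ^ 2 := by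
  have hK3 : 0 ≤ K ^ 3 := by positivity
  have hK23 : K ^ 2 * y ^ 2 ≤ K ^ 3 * y ^ 2 := by
    gcongr
    norm_num
  have hK2 : 0 ≤ K ^ 2 * y ^ 2 := by positivity
  have hsub := mul_nonneg hK3 (sq_nonneg (x - y))
  have hadd := mul_nonneg hK3 (sq_nonneg (x + y))
  have hp := sq_nonneg (K * e * x + y)
  rcases hd with rfl | rfl <;> rcases he with rfl | rfl <;> nlinarith

/-- The pointwise linear-algebra inequality behind the forwards–backwards estimate for the
composed sawtooth shear maps (same index): for the `4 × 2` matrix `Q` with rows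
`(1, K a₁)`, `(K a₂, 1 + K² a₁ a₂)`, `(1 + K² a₃ a₄, -K a₄)`, `(-K a₃, 1)` built from signs
`aᵢ ∈ {±1}`, one has `|Q v|² ≥ (K⁴ - C K³) |v|²` for a universal constant `C`. -/
theorem matrix_lower_bound_same_index :
    ∃ C : ℝ, 0 < C ∧ ∀ K : ℝ, 1 ≤ K →
      ∀ a₁ a₂ a₃ a₄ : ℝ, (a₁ = 1 ∨ a₁ = -1) → (a₂ = 1 ∨ a₂ = -1) →
        (a₃ = 1 ∨ a₃ = -1) → (a₄ = 1 ∨ a₄ = -1) →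
        ∀ v : ℝ × ℝ,
          (K ^ 4 - C * K ^ 3) * (v.1 ^ 2 + v.2 ^ 2) ≤
            (v.1 + K * a₁ * v.2) ^ 2 +
            (K * a₂ * v.1 + (1 + K ^ 2 * a₁ * a₂) * v.2) ^ 2 +
            ((1 + K ^ 2 * a₃ * a₄) * v.1 - K * a₄ * v.2) ^ 2 +
            (-(K * a₃) * v.1 + v.2) ^ 2 := by
  have sign_mul : ∀ a b : ℝ, (a = 1 ∨ a = -1) → (b = 1 ∨ b = -1) →
      (a * b = 1 ∨ a * b = -1) := by
    rintro a b (rfl | rfl) (rfl | rfl) <;> norm_num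
  refine ⟨4, by norm_num, ?_⟩
  rintro K hK a₁ a₂ a₃ a₄ h₁ h₂ h₃ h₄ ⟨x, y⟩
  have row₂ := dominant_row_bound K hK (a₁ * a₂) a₂ (sign_mul _ _ h₁ h₂) h₂ x y
  have row₃ := dominant_row_bound K hK (a₃ * a₄) (-a₄) (sign_mul _ _ h₃ h₄)
    (by rcases h₄ with rfl | rfl <;> norm_num) y x
  have row₁ := sq_nonneg (x + K * a₁ * y)
  have row₄ := sq_nonneg (-(K * a₃) * x + y)
  dsimp only
  linarith
end

section
/- There exist universal constants M₀ ≥ 2 such that for all reals K, K' with K ≥ M₀ and 1 ≤ K'/K ≤ 17, all a₁, a₂, a₃, a₄ ∈ {−1, 1}, and all v ∈ ℝ², the 4×2 real matrix Q with rows (1, K a₁), (K a₂, 1 + K² a₁ a₂), (1 + K'² a₃ a₄, −K' a₄), (−K' a₃, 1) satisfies |Q v|² ≥ (1/2) K⁴ |v|², where |·| denotes the Euclidean norm. -/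
/-!
Only the second and third rows of `Q` are needed. Each is a dominant term `A` (`± K² v₂`, resp.
`± K'² v₁`) plus a lower-order term `B`, and Young's inequality gives
`(A + B)² ≥ (3/4) A² - 3 B²`. The losses `3 B²` are at most
`6 (K² + 1) v₁² + 6 (K'² + 1) v₂²`, and since `K ≤ K' ≤ 17 K` they are absorbed by
`(1/4) K⁴ |v|²` as soon as `K² ≥ 10000`.
-/

lemma young_sq_add (A B : ℝ) : 3 / 4 * A ^ 2 - 3 * B ^ 2 ≤ (A + B) ^ 2 := by
  nlinarith [sq_nonneg (A / 2 + 2 * B)]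

/-- The lower bound for a dominant row: a leading coefficient `L² a b` on `y`, perturbed by
`L a x + y` (the third row has this shape with `x`, `y` exchanged and a sign changed). -/
lemma row_lower_bound (L a b x y : ℝ) (ha : a ^ 2 = 1) (hb : b ^ 2 = 1) :
    3 / 4 * L ^ 4 * y ^ 2 - 6 * L ^ 2 * x ^ 2 - 6 * y ^ 2 ≤
      (L * a * x + (1 + L ^ 2 * b * a) * y) ^ 2 := by
  have h := young_sq_add (L ^ 2 * b * a * y) (L * a * x + y)
  have hA : (L ^ 2 * b * a * y) ^ 2 = L ^ 4 * y ^ 2 := by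
    calc (L ^ 2 * b * a * y) ^ 2 = L ^ 4 * y ^ 2 * b ^ 2 * a ^ 2 := by ring
      _ = L ^ 4 * y ^ 2 := by rw [ha, hb]; ring
  have hB : (L * a * x + y) ^ 2 ≤ 2 * (L ^ 2 * x ^ 2) + 2 * y ^ 2 := by
    have h2 : (L * a * x) ^ 2 = L ^ 2 * x ^ 2 := by
      calc (L * a * x) ^ 2 = L ^ 2 * x ^ 2 * a ^ 2 := by ring
        _ = L ^ 2 * x ^ 2 := by rw [ha]; ring
    nlinarith [sq_nonneg (L * a * x - y)]
  have e : L * a * x + (1 + L ^ 2 * b * a) * y = L ^ 2 * b * a * y + (L * a * x + y) := by ring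
  rw [e]
  linarith

/-- The pointwise linear-algebra inequality behind the forwards–backwards estimate for
consecutive sawtooth shear maps: for `K` large, `K'/K ∈ [1, 17]` and signs `aᵢ ∈ {±1}`,
the `4 × 2` matrix `Q` with rows `(1, K a₁)`, `(K a₂, 1 + K² a₁ a₂)`,
`(1 + K'² a₃ a₄, -K' a₄)`, `(-K' a₃, 1)` satisfies `|Q v|² ≥ (1/2) K⁴ |v|²`. -/
theorem matrix_lower_bound_consecutive_indices :
    ∃ M₀ : ℝ, 2 ≤ M₀ ∧ ∀ K K' : ℝ, M₀ ≤ K → 1 ≤ K' / K → K' / K ≤ 17 →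
      ∀ a₁ a₂ a₃ a₄ : ℝ, (a₁ = 1 ∨ a₁ = -1) → (a₂ = 1 ∨ a₂ = -1) →
        (a₃ = 1 ∨ a₃ = -1) → (a₄ = 1 ∨ a₄ = -1) →
        ∀ v : ℝ × ℝ,
          (1 / 2) * K ^ 4 * (v.1 ^ 2 + v.2 ^ 2) ≤
            (v.1 + K * a₁ * v.2) ^ 2 +
            (K * a₂ * v.1 + (1 + K ^ 2 * a₁ * a₂) * v.2) ^ 2 +
            ((1 + K' ^ 2 * a₃ * a₄) * v.1 - K' * a₄ * v.2) ^ 2 +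
            (-(K' * a₃) * v.1 + v.2) ^ 2 := by
  refine ⟨100, by norm_num, ?_⟩
  intro K K' hK h1 h17 a₁ a₂ a₃ a₄ ha₁ ha₂ ha₃ ha₄ v
  obtain ⟨x, y⟩ := v
  dsimp only
  have hK0 : 0 < K := by linarith
  rw [le_div_iff₀ hK0, one_mul] at h1
  rw [div_le_iff₀ hK0] at h17
  have s₁ : a₁ ^ 2 = 1 := by rcases ha₁ with h | h <;> simp [h]
  have s₂ : a₂ ^ 2 = 1 := by rcases ha₂ with h | h <;> simp [h]
  have s₃ : a₃ ^ 2 = 1 := by rcases ha₃ with h | h <;> simp [h]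
  have s₄ : a₄ ^ 2 = 1 := by rcases ha₄ with h | h <;> simp [h]
  have r2 := row_lower_bound K a₂ a₁ x y s₂ s₁
  have r3 := row_lower_bound (-K') a₄ a₃ y x s₄ s₃
  have e3 : -K' * a₄ * y + (1 + (-K') ^ 2 * a₃ * a₄) * x =
      (1 + K' ^ 2 * a₃ * a₄) * x - K' * a₄ * y := by ring
  rw [e3] at r3
  have hKsq : 10000 ≤ K ^ 2 := by nlinarith
  have hK4 : 10000 * K ^ 2 ≤ K ^ 4 := by nlinarith
  have hK'4 : K ^ 4 ≤ K' ^ 4 := by gcongr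
  have hK'2 : K' ^ 2 ≤ 289 * K ^ 2 := by nlinarith
  have cx : 0 ≤ (3 / 4 * K' ^ 4 - 6 * K ^ 2 - 6 - 1 / 2 * K ^ 4) * x ^ 2 :=
    mul_nonneg (by linarith) (sq_nonneg x)
  have cy : 0 ≤ (3 / 4 * K ^ 4 - 6 * K' ^ 2 - 6 - 1 / 2 * K ^ 4) * y ^ 2 :=
    mul_nonneg (by linarith) (sq_nonneg y)
  have q1 := sq_nonneg (x + K * a₁ * y)
  have q4 := sq_nonneg (-(K' * a₃) * x + y)
  nlinarith
end

section
/- Let (b_j)_{j≥0} be a sequence of real numbers with b_j ≥ 1 for all j ≥ 0 and suppose that b_{j+1}² + b_{j−1}² ≥ 2e² b_j² for every j ≥ 1. Then there exists an integer j₀ with 0 ≤ j₀ ≤ ⌈log b₀⌉ such that b_{j₀+1} ≥ b_{j₀}. -/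
/-!
If `b` were strictly decreasing on all of `0, …, N + 1` with `N = ⌈log b₀⌉`, then bounding
`b (j+1)² ≤ b j²` in the convexity hypothesis would give `(2e² - 1) b j² ≤ b (j-1)²`, hence
`e * b j ≤ b (j-1)` for `1 ≤ j ≤ N`. Iterating, `b N ≤ e⁻ᴺ b₀ ≤ 1`, so `b (N+1) < b N ≤ 1`,
contradicting `b ≥ 1`.
-/

/-- **Claim 1** in the proof of the discrete `H¹` growth lemma (abstract form).
If `b j ≥ 1` for all `j` and `b (j+1)² + b (j-1)² ≥ 2 e² b j²` for all `j ≥ 1`, then the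
sequence starts to increase at some index `j₀ ≤ ⌈log b₀⌉`. -/
theorem growth_starts_by_log_time (b : ℕ → ℝ) (hone : ∀ j, 1 ≤ b j)
    (hconv : ∀ j : ℕ, 1 ≤ j →
      2 * Real.exp 1 ^ 2 * b j ^ 2 ≤ b (j + 1) ^ 2 + b (j - 1) ^ 2) :
    ∃ j₀ : ℕ, (j₀ : ℤ) ≤ ⌈Real.log (b 0)⌉ ∧ b j₀ ≤ b (j₀ + 1) := by
  by_contra! hdec
  have hlog : 0 ≤ ⌈Real.log (b 0)⌉ := Int.ceil_nonneg (Real.log_nonneg (hone 0))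
  obtain ⟨N, hN⟩ := Int.eq_ofNat_of_zero_le hlog
  rw [hN] at hdec
  have hdec' : ∀ j ≤ N, b (j + 1) < b j := fun j hj => hdec j (by exact_mod_cast hj)
  have he : 1 ≤ Real.exp 1 := Real.one_le_exp zero_le_one
  have step : ∀ j, j + 1 ≤ N → Real.exp 1 * b (j + 1) ≤ b j := by
    intro j hj
    have h := hconv (j + 1) (by omega)
    rw [Nat.add_sub_cancel] at h
    have hsq : b (j + 1 + 1) ^ 2 ≤ b (j + 1) ^ 2 :=
      pow_le_pow_left₀ (by linarith [hone (j + 1 + 1)]) (hdec' _ hj).le 2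
    have he2 : b (j + 1) ^ 2 ≤ Real.exp 1 ^ 2 * b (j + 1) ^ 2 :=
      le_mul_of_one_le_left (sq_nonneg _) (one_le_pow₀ he)
    refine (pow_le_pow_iff_left₀ (by nlinarith [hone (j + 1)]) (by linarith [hone j])
      two_ne_zero).1 ?_
    rw [mul_pow]
    linarith
  have decay : ∀ j ≤ N, Real.exp 1 ^ j * b j ≤ b 0 := by
    intro j
    induction j with
    | zero => simp
    | succ j ih =>
      intro hj
      calc Real.exp 1 ^ (j + 1) * b (j + 1)
          = Real.exp 1 ^ j * (Real.exp 1 * b (j + 1)) := by ring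
        _ ≤ Real.exp 1 ^ j * b j := by gcongr; exact step j hj
        _ ≤ b 0 := ih (by omega)
  have hb0 : b 0 ≤ Real.exp 1 ^ N := by
    have h := Int.le_ceil (Real.log (b 0))
    rw [hN, Real.log_le_iff_le_exp (by linarith [hone 0])] at h
    simpa [← Real.exp_nat_mul] using h
  have hbN : b N ≤ 1 := by
    refine le_of_mul_le_mul_left ?_ (pow_pos (Real.exp_pos 1) N)
    linarith [decay N le_rfl]
  linarith [hdec' N le_rfl, hone (N + 1)]
end
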